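/- Let n ≥ 1 and let δ_1,…,δ_{n+1} be real-valued random variables on a probability space whose joint distribution is exchangeable, i.e., for every permutation π of {1,…,n+1}, the random vector (δ_{π(1)},…,δ_{π(n+1)}) has the same joint distribution as (δ_1,…,δ_{n+1}). Define the conformal p-value p = (1/(n+1)) · #{i ∈ {1,…,n+1} : δ_i ≥ δ_{n+1}}. Then for every α ∈ (0,1), P(p ≤ α) ≤ α. -/

import Mathlib

open MeasureTheory ProbabilityTheory

/-!
For a score vector `v`, let `r j` be the number of entries of `v` that are at least `v j`. At most
`c` indices `j` satisfy `r j ≤ c` (`card_upperRank_le`): if `j` has the smallest score among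
them, all of them are counted by `r j`. By exchangeability the events `r j ≤ c` all have the same
probability, namely that of the event for the test point. Summing over the `n + 1` indices and
taking expectations gives `(n + 1) * P(r (last) ≤ c) ≤ c`; the theorem is the case
`c = α * (n + 1)`.
-/

/-- The number of entries of `v` that are at least `v j`, ties and `j` itself included. -/
noncomputable def upperRank {m : ℕ} (v : Fin m → ℝ) (j : Fin m) : ℕ :=
  (Finset.univ.filter fun i : Fin m => v j ≤ v i).card

lemma card_upperRank_le {m : ℕ} (v : Fin m → ℝ) {c : ℝ} (hc : 0 ≤ c) :
    ((Finset.univ.filter fun j : Fin m => (upperRank v j : ℝ) ≤ c).card : ℝ) ≤ c := by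
  rcases (Finset.univ.filter fun j : Fin m => (upperRank v j : ℝ) ≤ c).eq_empty_or_nonempty
    with h | h
  · simpa [h] using hc
  · obtain ⟨j, hj, hmin⟩ := Finset.exists_min_image _ v h
    refine le_trans ?_ (Finset.mem_filter.1 hj).2
    exact_mod_cast Finset.card_le_card fun i hi =>
      Finset.mem_filter.2 ⟨Finset.mem_univ i, hmin i hi⟩

lemma upperRank_comp_perm {m : ℕ} (v : Fin m → ℝ) (π : Equiv.Perm (Fin m)) (j : Fin m) :
    upperRank (fun i => v (π i)) j = upperRank v (π j) :=
  Finset.card_equiv π (by simp)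

lemma measurable_upperRank {m : ℕ} (j : Fin m) :
    Measurable fun v : Fin m → ℝ => (upperRank v j : ℝ) := by
  simp only [upperRank, Finset.card_filter, Nat.cast_sum]
  refine Finset.measurable_sum _ fun i _ => ?_
  simp only [Nat.cast_ite, Nat.cast_one, Nat.cast_zero]
  exact Measurable.ite (measurableSet_le (measurable_pi_apply j) (measurable_pi_apply i))
    measurable_const measurable_const

/-- Super-uniformity of the conformal p-value: if the non-conformity
scores `δ 0, …, δ n` (the last one belonging to the test point) are exchangeable, then
the conformal p-value `p = (1/(n+1)) · #{i : δ i ≥ δ (last)}` satisfies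
`P(p ≤ α) ≤ α` for every `α ∈ (0,1)`. -/
theorem conformal_p_value_super_uniform
    (n : ℕ) (hn : 1 ≤ n)
    {Ω : Type*} [MeasureSpace Ω] [IsProbabilityMeasure (ℙ : Measure Ω)]
    (δ : Fin (n + 1) → Ω → ℝ)
    (hmeas : ∀ i, Measurable (δ i))
    (hexch : ∀ π : Equiv.Perm (Fin (n + 1)),
      Measure.map (fun x => fun i => δ (π i) x) ℙ
        = Measure.map (fun x => fun i => δ i x) ℙ)
    (p : Ω → ℝ)
    (hp : p = fun x =>
      ((Finset.univ.filter fun i : Fin (n + 1) => δ (Fin.last n) x ≤ δ i x).card : ℝ)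
        / (n + 1))
    (α : ℝ) (hα : 0 < α) (hα1 : α < 1) :
    ℙ {x | p x ≤ α} ≤ ENNReal.ofReal α := by
  have hn0 : (0 : ℝ) < n + 1 := by positivity
  set c : ℝ := α * (n + 1) with hc
  have hc0 : 0 ≤ c := by positivity
  let S : Fin (n + 1) → Set Ω := fun j => {x | (upperRank (fun i => δ i x) j : ℝ) ≤ c}
  have hpS : {x | p x ≤ α} = S (Fin.last n) := by
    ext x
    simp only [hp, S, Set.mem_ofPred_eq, div_le_iff₀ hn0, upperRank, hc]
  have hS : ∀ j, MeasurableSet (S j) := fun j =>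
    measurableSet_le ((measurable_upperRank j).comp (measurable_pi_lambda _ hmeas))
      measurable_const
  have hEq : ∀ j, ℙ (S j) = ℙ (S (Fin.last n)) := by
    intro j
    have hT : MeasurableSet {v : Fin (n + 1) → ℝ | (upperRank v (Fin.last n) : ℝ) ≤ c} :=
      measurableSet_le (measurable_upperRank _) measurable_const
    have h := congrArg (fun ν => ν {v : Fin (n + 1) → ℝ | (upperRank v (Fin.last n) : ℝ) ≤ c})
      (hexch (Equiv.swap j (Fin.last n)))
    rw [Measure.map_apply (measurable_pi_lambda _ fun i => hmeas _) hT,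
      Measure.map_apply (measurable_pi_lambda _ hmeas) hT] at h
    refine Eq.trans (congrArg _ ?_) h
    ext x
    simp only [S, Set.mem_ofPred_eq, Set.mem_preimage]
    rw [upperRank_comp_perm (fun i => δ i x), Equiv.swap_apply_right]
  have hsum : ∑ j, ℙ (S j) ≤ ENNReal.ofReal c := by
    calc ∑ j, ℙ (S j) = ∫⁻ x, ∑ j, (S j).indicator 1 x ∂ℙ := by
          rw [lintegral_finsetSum _ fun j _ => measurable_one.indicator (hS j)]
          simp only [lintegral_indicator_one (hS _)]
      _ ≤ ∫⁻ _, ENNReal.ofReal c ∂(ℙ : Measure Ω) := by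
          refine lintegral_mono fun x => ?_
          have h := ENNReal.ofReal_le_ofReal (card_upperRank_le (fun i => δ i x) hc0)
          rw [ENNReal.ofReal_natCast, Finset.card_filter, Nat.cast_sum] at h
          refine le_trans (le_of_eq (Finset.sum_congr rfl fun j _ => ?_)) h
          simp [S, Set.indicator_apply]
      _ = ENNReal.ofReal c := by simp
  rw [hpS]
  simp only [hEq, Finset.sum_const, Finset.card_univ, Fintype.card_fin, nsmul_eq_mul] at hsum
  have hN : ENNReal.ofReal c = ((n + 1 : ℕ) : ENNReal) * ENNReal.ofReal α := by
    rw [hc, mul_comm, ENNReal.ofReal_mul hn0.le, ← ENNReal.ofReal_natCast (n + 1)]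
    push_cast
    rfl
  rw [hN] at hsum
  exact (ENNReal.mul_le_mul_iff_right (by simp) (ENNReal.natCast_ne_top _)).1 hsum
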